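/- arXiv:2208.04442 — 4 statements merged into one kernel-verified Lean document; each statement's English description precedes it below -/
import Mathlib

section
/- Differential form of Theorem 2.2 (nonlocal constants): let L be a Lagrangian density on D-dimensional spacetime, let φ be a smooth solution of the Euler–Lagrange equation for L, and let Φ be a perturbed field associated with φ. Then for every spacetime point x, the derivative at ε = 0 of the map ε ↦ L(x, Φ(ε,x), ∇Φ_ε x) equals the spacetime divergence Σ_μ ∂_μ ( fun y ↦ L_{p_μ}(jφ y) · δΦ y ) x. (This pointwise identity is exactly what makes the paper's surface-minus-volume 'nonlocal constant' constant, by the divergence theorem.) -/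
open scoped BigOperators

noncomputable section

/-- Spacetime partial derivative `∂_μ F x`. -/
def pd {D : ℕ} (F : (Fin D → ℝ) → ℝ) (μ : Fin D) (x : Fin D → ℝ) : ℝ :=
  fderiv ℝ F x (Pi.single μ 1)

/-- Gradient (jet of first derivatives) of a field. -/
def grad {D : ℕ} (φ : (Fin D → ℝ) → ℝ) (x : Fin D → ℝ) : Fin D → ℝ :=
  fun ν => pd φ ν x

/-- Partial derivative of the Lagrangian density in its field argument `u`. -/
def Lu {D : ℕ} (L : (Fin D → ℝ) → ℝ → (Fin D → ℝ) → ℝ)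
    (x : Fin D → ℝ) (u : ℝ) (p : Fin D → ℝ) : ℝ :=
  deriv (fun v => L x v p) u

/-- Partial derivative of the Lagrangian density in the μ-th component of `p`. -/
def Lp {D : ℕ} (L : (Fin D → ℝ) → ℝ → (Fin D → ℝ) → ℝ) (μ : Fin D)
    (x : Fin D → ℝ) (u : ℝ) (p : Fin D → ℝ) : ℝ :=
  fderiv ℝ (fun q => L x u q) p (Pi.single μ 1)

/-!
By the chain rule `δ(L(jΦ)) = L_u δΦ + Σ_μ L_{p_μ} δ(∂_μ Φ)`, and `δ(∂_μ Φ) = ∂_μ(δΦ)` by the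
symmetry of second derivatives. Undoing the product rule in the last sum gives the first variation
formula `δ(L(jΦ)) = (L_u - Σ_μ ∂_μ L_{p_μ}) δΦ + Σ_μ ∂_μ(L_{p_μ} δΦ)`, whose first term vanishes on
a solution of the Euler–Lagrange equation.
-/

section Slices

variable {𝕜 E F G : Type*} [NontriviallyNormedField 𝕜]
  [NormedAddCommGroup E] [NormedSpace 𝕜 E] [NormedAddCommGroup F] [NormedSpace 𝕜 F]
  [NormedAddCommGroup G] [NormedSpace 𝕜 G]

theorem fderiv_slice_right_apply {f : E × F → G} {a : E} {b : F}
    (hf : DifferentiableAt 𝕜 f (a, b)) (v : F) :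
    fderiv 𝕜 (fun y => f (a, y)) b v = fderiv 𝕜 f (a, b) (0, v) := by
  have hslice : HasFDerivAt (fun y => f (a, y)) _ b :=
    hf.hasFDerivAt.comp b (hasFDerivAt_prodMk_right a b)
  rw [hslice.fderiv]
  rfl

theorem hasDerivAt_slice_left {f : 𝕜 × F → G} {t : 𝕜} {b : F}
    (hf : DifferentiableAt 𝕜 f (t, b)) :
    HasDerivAt (fun s => f (s, b)) (fderiv 𝕜 f (t, b) (1, 0)) t :=
  hf.hasFDerivAt.comp_hasDerivAt t ((hasDerivAt_id t).prodMk (hasDerivAt_const t b))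

theorem fderiv_fderiv_const_apply {f : E → G} {z : E} (hf : DifferentiableAt 𝕜 (fderiv 𝕜 f) z)
    (v w : E) :
    fderiv 𝕜 (fun y => fderiv 𝕜 f y v) z w = fderiv 𝕜 (fderiv 𝕜 f) z w v := by
  simp [fderiv_clm_apply hf (differentiableAt_const v)]

theorem hasDerivAt_fderiv_slice_apply {n : WithTop ℕ∞} (hn : minSmoothness 𝕜 2 ≤ n)
    {f : 𝕜 × F → G} (hf : ContDiff 𝕜 n f) (t : 𝕜) (b v : F) :
    HasDerivAt (fun s => fderiv 𝕜 (fun y => f (s, y)) b v)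
      (fderiv 𝕜 (fun y => deriv (fun s => f (s, y)) t) b v) t := by
  have two_le : 2 ≤ n := le_minSmoothness.trans hn
  have hf_diff : Differentiable 𝕜 f := hf.differentiable (two_pos.trans_le two_le).ne'
  have hfderiv_diff : Differentiable 𝕜 (fderiv 𝕜 f) :=
    (hf.fderiv_right (m := 1) (by rwa [one_add_one_eq_two])).differentiable one_ne_zero
  have hpartial_diff (w : 𝕜 × F) : Differentiable 𝕜 fun z => fderiv 𝕜 f z w :=
    hfderiv_diff.clm_apply (differentiable_const w)
  have hsymm : fderiv 𝕜 (fun z => fderiv 𝕜 f z (0, v)) (t, b) (1, 0) =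
      fderiv 𝕜 (fun z => fderiv 𝕜 f z (1, 0)) (t, b) (0, v) := by
    rw [fderiv_fderiv_const_apply (hfderiv_diff _), fderiv_fderiv_const_apply (hfderiv_diff _)]
    exact (hf.contDiffAt.isSymmSndFDerivAt hn).eq _ _
  simp only [fderiv_slice_right_apply (hf_diff _), (hasDerivAt_slice_left (hf_diff _)).deriv]
  rw [fderiv_slice_right_apply (hpartial_diff _ _), ← hsymm]
  exact hasDerivAt_slice_left (hpartial_diff _ _)

theorem contDiff_deriv_slice_left {m n : WithTop ℕ∞} (hmn : m + 1 ≤ n) {f : 𝕜 × F → G}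
    (hf : ContDiff 𝕜 n f) (t : 𝕜) : ContDiff 𝕜 m fun y => deriv (fun s => f (s, y)) t := by
  have hf_diff : Differentiable 𝕜 f :=
    hf.differentiable (one_pos.trans_le (le_add_self.trans hmn)).ne'
  simp only [(hasDerivAt_slice_left (hf_diff _)).deriv]
  exact ((hf.fderiv_right hmn).comp (contDiff_prodMk_right t)).clm_apply contDiff_const

end Slices

section Spacetime

variable {D : ℕ}

theorem pd_mul {f g : (Fin D → ℝ) → ℝ} {x : Fin D → ℝ} (hf : DifferentiableAt ℝ f x)
    (hg : DifferentiableAt ℝ g x) (μ : Fin D) :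
    pd (fun y => f y * g y) μ x = pd f μ x * g x + f x * pd g μ x := by
  simp only [pd, fderiv_fun_mul hf hg, add_apply, smul_apply, smul_eq_mul]
  ring

theorem sum_pd_mul {P : Fin D → (Fin D → ℝ) → ℝ} {g : (Fin D → ℝ) → ℝ} {x : Fin D → ℝ}
    (hP : ∀ μ, DifferentiableAt ℝ (P μ) x) (hg : DifferentiableAt ℝ g x) :
    ∑ μ, pd (fun y => P μ y * g y) μ x =
      (∑ μ, pd (P μ) μ x) * g x + ∑ μ, P μ x * pd g μ x := by
  simp only [pd_mul (hP _) hg, Finset.sum_add_distrib, Finset.sum_mul]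

theorem contDiff_grad {m n : WithTop ℕ∞} (hmn : m + 1 ≤ n) {φ : (Fin D → ℝ) → ℝ}
    (hφ : ContDiff ℝ n φ) : ContDiff ℝ m (grad φ) :=
  contDiff_pi.2 fun _ => (hφ.fderiv_right hmn).clm_apply contDiff_const

end Spacetime

section Lagrangian

variable {D : ℕ} {L : (Fin D → ℝ) → ℝ → (Fin D → ℝ) → ℝ}

/-- The Lagrangian density as a function of a single point `(x, u, p)` of the jet space. -/
def jetLagrangian (L : (Fin D → ℝ) → ℝ → (Fin D → ℝ) → ℝ)
    (q : (Fin D → ℝ) × ℝ × (Fin D → ℝ)) : ℝ :=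
  L q.1 q.2.1 q.2.2

/-- The canonical momentum density `L_{p_μ}(jφ)` of the field `φ`. -/
def momentum (L : (Fin D → ℝ) → ℝ → (Fin D → ℝ) → ℝ) (φ : (Fin D → ℝ) → ℝ) (μ : Fin D)
    (y : Fin D → ℝ) : ℝ :=
  Lp L μ y (φ y) (grad φ y)

/-- The Euler–Lagrange expression `L_u(jφ) - ∑ μ, ∂_μ (L_{p_μ}(jφ))`, which vanishes exactly when
`φ` satisfies the Euler–Lagrange equation. -/
def eulerLagrange (L : (Fin D → ℝ) → ℝ → (Fin D → ℝ) → ℝ) (φ : (Fin D → ℝ) → ℝ)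
    (x : Fin D → ℝ) : ℝ :=
  Lu L x (φ x) (grad φ x) - ∑ μ, pd (momentum L φ μ) μ x

/-- The infinitesimal variation `δΦ` of a perturbed field `Φ`, the perturbation parameter being the
first argument of `Φ`. -/
def variation (Φ : ℝ × (Fin D → ℝ) → ℝ) (y : Fin D → ℝ) : ℝ :=
  deriv (fun ε => Φ (ε, y)) 0

theorem Lu_eq_fderiv_jetLagrangian {x : Fin D → ℝ} {u : ℝ} {p : Fin D → ℝ}
    (hL : DifferentiableAt ℝ (jetLagrangian L) (x, u, p)) :
    Lu L x u p = fderiv ℝ (jetLagrangian L) (x, u, p) (0, 1, 0) := by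
  have hcurve : HasDerivAt (fun v => (x, v, p)) (0, 1, 0) u :=
    (hasDerivAt_const u x).prodMk ((hasDerivAt_id u).prodMk (hasDerivAt_const u p))
  exact (hL.hasFDerivAt.comp_hasDerivAt u hcurve).deriv

theorem Lp_eq_fderiv_jetLagrangian {x : Fin D → ℝ} {u : ℝ} {p : Fin D → ℝ}
    (hL : DifferentiableAt ℝ (jetLagrangian L) (x, u, p)) (μ : Fin D) :
    Lp L μ x u p = fderiv ℝ (jetLagrangian L) (x, u, p) (0, 0, Pi.single μ 1) := by
  have hembed : HasFDerivAt (fun q => (x, u, q)) _ p :=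
    (hasFDerivAt_prodMk_right x (u, p)).comp p (hasFDerivAt_prodMk_right (𝕜 := ℝ) u p)
  exact DFunLike.congr_fun (hL.hasFDerivAt.comp p hembed).fderiv (Pi.single μ 1)

theorem fderiv_jetLagrangian_apply {x : Fin D → ℝ} {u : ℝ} {p : Fin D → ℝ}
    (hL : DifferentiableAt ℝ (jetLagrangian L) (x, u, p)) (a : ℝ) (b : Fin D → ℝ) :
    fderiv ℝ (jetLagrangian L) (x, u, p) (0, a, b) =
      Lu L x u p * a + ∑ μ, Lp L μ x u p * b μ := by
  have hdecomp : ((0, a, b) : (Fin D → ℝ) × ℝ × (Fin D → ℝ)) =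
      a • (0, 1, 0) + ∑ μ, b μ • (0, 0, Pi.single μ 1) := by
    ext <;> simp [Prod.fst_sum, Prod.snd_sum, Finset.sum_apply, Pi.single_apply]
  simp only [hdecomp, map_add, map_sum, map_smul, smul_eq_mul, Lu_eq_fderiv_jetLagrangian hL,
    Lp_eq_fderiv_jetLagrangian hL, mul_comm]

theorem hasDerivAt_lagrangian {x : Fin D → ℝ} {u : ℝ → ℝ} {p : ℝ → Fin D → ℝ} {t u' : ℝ}
    {p' : Fin D → ℝ} (hL : DifferentiableAt ℝ (jetLagrangian L) (x, u t, p t))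
    (hu : HasDerivAt u u' t) (hp : HasDerivAt p p' t) :
    HasDerivAt (fun s => L x (u s) (p s))
      (Lu L x (u t) (p t) * u' + ∑ μ, Lp L μ x (u t) (p t) * p' μ) t := by
  rw [← fderiv_jetLagrangian_apply hL]
  exact hL.hasFDerivAt.comp_hasDerivAt t ((hasDerivAt_const t x).prodMk (hu.prodMk hp))

theorem contDiff_momentum {m n : WithTop ℕ∞} (hmn : m + 1 ≤ n)
    (hL : ContDiff ℝ n (jetLagrangian L)) {φ : (Fin D → ℝ) → ℝ} (hφ : ContDiff ℝ n φ)
    (μ : Fin D) : ContDiff ℝ m (momentum L φ μ) := by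
  have hL_diff : Differentiable ℝ (jetLagrangian L) :=
    hL.differentiable (one_pos.trans_le (le_add_self.trans hmn)).ne'
  have hjet : ContDiff ℝ m fun y => (y, φ y, grad φ y) :=
    contDiff_id.prodMk ((hφ.of_le (le_self_add.trans hmn)).prodMk (contDiff_grad hmn hφ))
  unfold momentum
  simp only [Lp_eq_fderiv_jetLagrangian (hL_diff _)]
  exact ((hL.fderiv_right hmn).comp hjet).clm_apply contDiff_const

theorem hasDerivAt_grad_slice {Φ : ℝ × (Fin D → ℝ) → ℝ} (hΦ : ContDiff ℝ 2 Φ)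
    (x : Fin D → ℝ) :
    HasDerivAt (fun ε => grad (fun y => Φ (ε, y)) x) (grad (variation Φ) x) 0 :=
  hasDerivAt_pi.2 fun _ => hasDerivAt_fderiv_slice_apply (by simp) hΦ 0 x _

theorem first_variation_formula (hL : ContDiff ℝ 2 (jetLagrangian L))
    {Φ : ℝ × (Fin D → ℝ) → ℝ} (hΦ : ContDiff ℝ 2 Φ) {φ : (Fin D → ℝ) → ℝ}
    (hΦ0 : ∀ x, Φ (0, x) = φ x) (x : Fin D → ℝ) :
    deriv (fun ε => L x (Φ (ε, x)) (grad (fun y => Φ (ε, y)) x)) 0 =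
      eulerLagrange L φ x * variation Φ x +
        ∑ μ, pd (fun y => momentum L φ μ y * variation Φ y) μ x := by
  obtain rfl : (fun y => Φ (0, y)) = φ := funext hΦ0
  have one_add_one_le : (1 : WithTop ℕ∞) + 1 ≤ 2 := one_add_one_eq_two.le
  have hu : HasDerivAt (fun ε => Φ (ε, x)) (variation Φ x) 0 :=
    (hasDerivAt_slice_left (hΦ.differentiable two_ne_zero _)).differentiableAt.hasDerivAt
  have hmomentum (μ : Fin D) : DifferentiableAt ℝ (momentum L (fun y => Φ (0, y)) μ) x :=
    (contDiff_momentum one_add_one_le hL (hΦ.comp (contDiff_prodMk_right 0)) μ).differentiable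
      one_ne_zero x
  have hvariation : DifferentiableAt ℝ (variation Φ) x :=
    (contDiff_deriv_slice_left one_add_one_le hΦ 0).differentiable one_ne_zero x
  rw [(hasDerivAt_lagrangian (hL.differentiable two_ne_zero _) hu
    (hasDerivAt_grad_slice hΦ x)).deriv, sum_pd_mul hmomentum hvariation]
  simp only [eulerLagrange, momentum, grad]
  ring

theorem nonlocal_constant_differential_form_general (hL : ContDiff ℝ 2 (jetLagrangian L))
    {Φ : ℝ × (Fin D → ℝ) → ℝ} (hΦ : ContDiff ℝ 2 Φ) {φ : (Fin D → ℝ) → ℝ}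
    (hΦ0 : ∀ x, Φ (0, x) = φ x) {x : Fin D → ℝ} (hEL : eulerLagrange L φ x = 0) :
    deriv (fun ε => L x (Φ (ε, x)) (grad (fun y => Φ (ε, y)) x)) 0 =
      ∑ μ, pd (fun y => momentum L φ μ y * variation Φ y) μ x := by
  rw [first_variation_formula hL hΦ hΦ0, hEL, zero_mul, zero_add]

end Lagrangian

/-- Differential form of Theorem 2.2 (nonlocal constants). -/
theorem nonlocal_constant_differential_form {D : ℕ} (hD : 1 ≤ D)
    (L : (Fin D → ℝ) → ℝ → (Fin D → ℝ) → ℝ)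
    (hL : ContDiff ℝ (⊤ : ℕ∞) (fun q : (Fin D → ℝ) × ℝ × (Fin D → ℝ) => L q.1 q.2.1 q.2.2))
    (φ : (Fin D → ℝ) → ℝ) (hφ : ContDiff ℝ (⊤ : ℕ∞) φ)
    (hEL : ∀ x, Lu L x (φ x) (grad φ x) =
      ∑ μ, pd (fun y => Lp L μ y (φ y) (grad φ y)) μ x)
    (Φ : ℝ × (Fin D → ℝ) → ℝ) (hΦ : ContDiff ℝ (⊤ : ℕ∞) Φ)
    (hΦ0 : ∀ x, Φ (0, x) = φ x) :
    ∀ x, deriv (fun ε => L x (Φ (ε, x)) (fun ν => pd (fun y => Φ (ε, y)) ν x)) 0 =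
      ∑ μ, pd (fun y => Lp L μ y (φ y) (grad φ y) * deriv (fun ε => Φ (ε, y)) 0) μ x := by
  have two_le : (2 : WithTop ℕ∞) ≤ (⊤ : ℕ∞) := WithTop.coe_le_coe.2 le_top
  exact fun x => nonlocal_constant_differential_form_general (hL.of_le two_le) (hΦ.of_le two_le)
    hΦ0 (sub_eq_zero.2 (hEL x))

end
end

section
/- Symmetry of the Energy–Momentum tensor (claim after Theorem 3.3): suppose the spacetime-independent Lagrangian density has the form L₀(u, p) = F(u, Σ_{α,β} η α β · p_α · p_β) for a smooth F : ℝ → ℝ → ℝ. Then for every smooth field φ and every spacetime point x, the contravariant Energy–Momentum tensor T^{μν} x := Σ_σ η ν σ · T^μ_σ x, where T^μ_ν x := L₀_{p_μ}(φ x, ∇φ x)·∂_ν φ x − (if μ = ν then L₀(φ x, ∇φ x) else 0), is symmetric: T^{μν} x = T^{νμ} x for all μ, ν. -/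
open scoped BigOperators

noncomputable section

/-- Minkowski metric on `Fin D`. -/
def eta (D : ℕ) (μ ν : Fin D) : ℝ :=
  if μ = ν then (if (μ : ℕ) = 0 then 1 else -1) else 0

/-- Partial derivative of a spacetime-independent Lagrangian in the μ-th component of `p`. -/
def Lp0 {D : ℕ} (L₀ : ℝ → (Fin D → ℝ) → ℝ) (μ : Fin D) (u : ℝ) (p : Fin D → ℝ) : ℝ :=
  fderiv ℝ (L₀ u) p (Pi.single μ 1)

/-!
For a Lagrangian `f (g^{αβ} p_α p_β)` with `g` symmetric, the chain rule gives
`∂L/∂p_μ = 2 (deriv f) p^μ` with `p^μ = g^{μβ} p_β`. Raising the second index of the energy-momentum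
tensor therefore yields `2 (deriv f) p^μ p^ν - g^{μν} L`, which is visibly symmetric.
-/

section SymmetricMetric

open scoped Matrix

variable {𝕜 ι : Type*} [NontriviallyNormedField 𝕜] [Fintype ι]

theorem hasFDerivAt_sum_sum_mul_mul (g : Matrix ι ι 𝕜) (p : ι → 𝕜) :
    HasFDerivAt (fun q : ι → 𝕜 => ∑ α, ∑ β, g α β * q α * q β)
      (∑ α, ((g + gᵀ) *ᵥ p) α • (ContinuousLinearMap.proj α : (ι → 𝕜) →L[𝕜] 𝕜)) p := by
  have hasFDerivAt_monomials := HasFDerivAt.fun_sum (u := Finset.univ) fun α _ =>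
    HasFDerivAt.fun_sum (u := Finset.univ) fun β _ =>
      ((hasFDerivAt_apply (𝕜 := 𝕜) α p).const_mul (g α β)).mul (hasFDerivAt_apply β p)
  refine hasFDerivAt_monomials.congr_fderiv (ContinuousLinearMap.ext fun v => ?_)
  simp only [sum_apply, add_apply, smul_apply, ContinuousLinearMap.proj_apply, smul_eq_mul,
    Matrix.mulVec, dotProduct, Matrix.add_apply, Matrix.transpose_apply, add_mul,
    Finset.sum_add_distrib, Finset.sum_mul]
  rw [add_comm, Finset.sum_comm (f := fun α β => g α β * p α * v β)]
  exact congrArg (· + _) <|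
    Finset.sum_congr rfl fun α _ => Finset.sum_congr rfl fun β _ => by ring

variable [DecidableEq ι] {g : Matrix ι ι 𝕜} {f : 𝕜 → 𝕜} {L : (ι → 𝕜) → 𝕜} {p : ι → 𝕜}

theorem fderiv_single_of_eq_comp_sum_sum (hg : g.IsSymm)
    (hL : ∀ q, L q = f (∑ α, ∑ β, g α β * q α * q β))
    (hf : DifferentiableAt 𝕜 f (∑ α, ∑ β, g α β * p α * p β)) (μ : ι) :
    fderiv 𝕜 L p (Pi.single μ 1) =
      2 * deriv f (∑ α, ∑ β, g α β * p α * p β) * (g *ᵥ p) μ := by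
  have hasFDerivAt_L := hf.hasDerivAt.comp_hasFDerivAt p (hasFDerivAt_sum_sum_mul_mul g p)
  rw [funext hL, ← Function.comp_def f, hasFDerivAt_L.fderiv, hg.eq, Matrix.add_mulVec]
  simp only [smul_apply, sum_apply, ContinuousLinearMap.proj_apply, smul_eq_mul, Pi.single_apply,
    mul_ite, mul_one, mul_zero, Finset.sum_ite_eq', Finset.mem_univ, if_true, Pi.add_apply]
  ring

theorem sum_mul_energy_momentum_eq (hg : g.IsSymm)
    (hL : ∀ q, L q = f (∑ α, ∑ β, g α β * q α * q β))
    (hf : DifferentiableAt 𝕜 f (∑ α, ∑ β, g α β * p α * p β)) (μ ν : ι) :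
    ∑ σ, g ν σ * (fderiv 𝕜 L p (Pi.single μ 1) * p σ - if μ = σ then L p else 0) =
      2 * deriv f (∑ α, ∑ β, g α β * p α * p β) * (g *ᵥ p) μ * (g *ᵥ p) ν - g ν μ * L p := by
  rw [← fderiv_single_of_eq_comp_sum_sum hg hL hf μ]
  simp only [mul_sub, Finset.sum_sub_distrib, mul_ite, mul_zero, Finset.sum_ite_eq,
    Finset.mem_univ, if_true, Matrix.mulVec, dotProduct, Finset.mul_sum, mul_left_comm]

/-- The tensor depends on the field only through its value and gradient at a point, so `p` is
an arbitrary covector and `L`, `f` are the Lagrangian and its profile at a fixed field value. -/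
theorem energy_momentum_tensor_symmetric_general (hg : g.IsSymm)
    (hL : ∀ q, L q = f (∑ α, ∑ β, g α β * q α * q β))
    (hf : DifferentiableAt 𝕜 f (∑ α, ∑ β, g α β * p α * p β)) {T : ι → ι → 𝕜}
    (hT : ∀ μ ν, T μ ν =
      fderiv 𝕜 L p (Pi.single μ 1) * p ν - (if μ = ν then L p else 0)) (μ ν : ι) :
    ∑ σ, g ν σ * T μ σ = ∑ σ, g μ σ * T ν σ := by
  simp only [hT, sum_mul_energy_momentum_eq hg hL hf]
  rw [hg.apply μ ν, mul_right_comm]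

end SymmetricMetric

theorem eta_isSymm (D : ℕ) : Matrix.IsSymm (eta D) :=
  Matrix.IsSymm.ext fun μ ν => by
    obtain rfl | hne := eq_or_ne μ ν
    · rfl
    · simp [eta, hne, hne.symm]

/-- Symmetry of the (contravariant) Energy–Momentum tensor for Lagrangians of the
form `L₀ u p = F (u, η^{αβ} p_α p_β)`. -/
theorem energy_momentum_tensor_symmetric {D : ℕ} (hD : 1 ≤ D)
    (F : ℝ → ℝ → ℝ) (hF : ContDiff ℝ (⊤ : ℕ∞) (fun q : ℝ × ℝ => F q.1 q.2))
    (L₀ : ℝ → (Fin D → ℝ) → ℝ)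
    (hL₀ : ∀ u p, L₀ u p = F u (∑ α, ∑ β, eta D α β * p α * p β))
    (φ : (Fin D → ℝ) → ℝ) (hφ : ContDiff ℝ (⊤ : ℕ∞) φ)
    (T : Fin D → Fin D → (Fin D → ℝ) → ℝ)
    (hT : ∀ μ ν x, T μ ν x =
      Lp0 L₀ μ (φ x) (grad φ x) * pd φ ν x -
        (if μ = ν then L₀ (φ x) (grad φ x) else 0)) :
    ∀ (μ ν : Fin D) (x : Fin D → ℝ),
      (∑ σ, eta D ν σ * T μ σ x) = ∑ σ, eta D μ σ * T ν σ x := by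
  intro μ ν x
  have hFu : Differentiable ℝ (F (φ x)) :=
    (hF.differentiable (by simp)).comp ((differentiable_const (φ x)).prodMk differentiable_id)
  exact energy_momentum_tensor_symmetric_general (eta_isSymm D) (hL₀ (φ x)) (hFu _)
    (hT · · x) μ ν

end
end

section
/- Free Klein–Gordon theory satisfies the hypothesis of Theorem 3.4 and its current degenerates to the Energy–Momentum tensor: fix m ∈ ℝ with m ≠ 0 and consider the Klein–Gordon Lagrangian density L(x,u,p) := (1/2)·Σ_{μ,ν} η μ ν·p_μ·p_ν − (1/2)·m²·u². Then: (i) for every smooth field ψ : (Fin D → ℝ) → ℝ, every x, and every μ, one has Σ_ν η μ ν · L_{p_ν}(jψ x) = (−m^{-2}) · ∂_μ (fun y ↦ L_u(jψ y)) x (the proportionality condition of Theorem 3.4 with ρ = −m^{-2}); and (ii) for every smooth field φ, the associated tensor K^μ_ν x := L_{p_μ}(jφ x)·(Σ_α η ν α·L_{p_α}(jφ x)) − (1/2)·(if μ = ν then (−m^{-2})·(L_u(jφ x))² + Σ_{α,β} η α β·L_{p_α}(jφ x)·L_{p_β}(jφ x) else 0) equals pointwise the Energy–Momentum tensor T^μ_ν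 x := ∂^μ φ x·∂_ν φ x − (if μ = ν then (1/2)·Σ_{α,β} η α β·∂_α φ x·∂_β φ x − (1/2)·m²·(φ x)² else 0). -/
open scoped BigOperators

noncomputable section

/-- Raised-index partial derivative `∂^μ F x`. -/
def pdu {D : ℕ} (F : (Fin D → ℝ) → ℝ) (μ : Fin D) (x : Fin D → ℝ) : ℝ :=
  ∑ ν, eta D μ ν * pd F ν x

/-!
The conjugate momentum of the Klein–Gordon Lagrangian is the gradient with its index raised, and
`L_u = -m² u`. Lowering the index of the momentum therefore returns the gradient, which is
proportional to the derivative of `L_u`. For the current, the norm square of the momentum is that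
of the gradient, and `(-m⁻²) L_u² = -m² u²`.
-/

open Matrix

section QuadraticForm

variable {ι R : Type*} [Fintype ι]

lemma sum_sum_mul_mul_eq_dotProduct_mulVec [CommSemiring R] (A : Matrix ι ι R) (v w : ι → R) :
    ∑ i, ∑ j, A i j * v i * w j = v ⬝ᵥ A *ᵥ w := by
  simp only [dotProduct, mulVec, Finset.mul_sum]
  exact Finset.sum_congr rfl fun i _ => Finset.sum_congr rfl fun j _ => by ring

lemma mulVec_mulVec_of_mul_eq_one [DecidableEq ι] [Semiring R] {A B : Matrix ι ι R}
    (hAB : A * B = 1) (v : ι → R) : A *ᵥ B *ᵥ v = v := by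
  rw [mulVec_mulVec, hAB, one_mulVec]

lemma mulVec_dotProduct_mulVec_mulVec_of_mul_eq_one [DecidableEq ι] [CommSemiring R]
    {A B : Matrix ι ι R} (hAB : A * B = 1) (v : ι → R) :
    (B *ᵥ v) ⬝ᵥ A *ᵥ B *ᵥ v = v ⬝ᵥ B *ᵥ v := by
  rw [mulVec_mulVec_of_mul_eq_one hAB, dotProduct_comm]

lemma hasFDerivAt_dotProduct_mulVec_self (A : Matrix ι ι ℝ) (p : ι → ℝ) :
    HasFDerivAt (fun q : ι → ℝ => q ⬝ᵥ A *ᵥ q)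
      (dotProductBilin ℝ ℝ ((A + Aᵀ) *ᵥ p)).toContinuousLinearMap p := by
  classical
  have hB := (toBilin' A).toContinuousBilinearMap.hasFDerivAt_of_bilinear
    (hasFDerivAt_id p) (hasFDerivAt_id p)
  simp only [LinearMap.toContinuousBilinearMap_apply, toBilin'_apply', id_eq] at hB
  refine hB.congr_fderiv (ContinuousLinearMap.ext fun v => ?_)
  have hgrad : p ⬝ᵥ A *ᵥ v + v ⬝ᵥ A *ᵥ p = ((A + Aᵀ) *ᵥ p) ⬝ᵥ v := by
    rw [add_mulVec, add_dotProduct, mulVec_transpose, dotProduct_mulVec p, dotProduct_comm v,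
      add_comm]
  simpa [toBilin'_apply'] using hgrad

end QuadraticForm

lemma pd_const_mul {D : ℕ} {F : (Fin D → ℝ) → ℝ} {x : Fin D → ℝ} (hF : DifferentiableAt ℝ F x)
    (c : ℝ) (μ : Fin D) : pd (fun y => c * F y) μ x = c * pd F μ x := by
  simp [pd, fderiv_const_mul hF]

section KleinGordon

variable {D : ℕ}

/-- The Klein–Gordon Lagrangian density of mass `m` on flat space with an arbitrary constant metric,
given through the matrix `gInv` of the metric with upper indices. -/
def kleinGordonLagrangian (gInv : Matrix (Fin D) (Fin D) ℝ) (m : ℝ)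
    (_x : Fin D → ℝ) (u : ℝ) (p : Fin D → ℝ) : ℝ :=
  (1 / 2) * (∑ μ, ∑ ν, gInv μ ν * p μ * p ν) - (1 / 2) * m ^ 2 * u ^ 2

lemma Lu_kleinGordonLagrangian (gInv : Matrix (Fin D) (Fin D) ℝ) (m : ℝ)
    (x : Fin D → ℝ) (u : ℝ) (p : Fin D → ℝ) :
    Lu (kleinGordonLagrangian gInv m) x u p = -m ^ 2 * u := by
  have h := ((hasDerivAt_pow 2 u).const_mul ((1 / 2) * m ^ 2)).const_sub
    ((1 / 2) * ∑ μ, ∑ ν, gInv μ ν * p μ * p ν)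
  refine h.deriv.trans ?_
  push_cast
  ring

lemma Lp_kleinGordonLagrangian {gInv : Matrix (Fin D) (Fin D) ℝ} (hsymm : gInv.IsSymm) (m : ℝ)
    (μ : Fin D) (x : Fin D → ℝ) (u : ℝ) (p : Fin D → ℝ) :
    Lp (kleinGordonLagrangian gInv m) μ x u p = (gInv *ᵥ p) μ := by
  have h := ((hasFDerivAt_dotProduct_mulVec_self gInv p).const_mul (1 / 2)).sub_const
    ((1 / 2) * m ^ 2 * u ^ 2)
  simp only [Lp, kleinGordonLagrangian, sum_sum_mul_mul_eq_dotProduct_mulVec, h.fderiv]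
  calc (1 / 2 : ℝ) * (((gInv + gInvᵀ) *ᵥ p) ⬝ᵥ Pi.single μ 1)
      = (1 / 2) * ((gInv *ᵥ p) μ + (gInv *ᵥ p) μ) := by
        rw [dotProduct_single_one, hsymm.eq, add_mulVec, Pi.add_apply]
    _ = (gInv *ᵥ p) μ := by ring

theorem klein_gordon_K_equals_T_general {g gInv : Matrix (Fin D) (Fin D) ℝ}
    (hsymm : gInv.IsSymm) (hg : g * gInv = 1) {m : ℝ} (hm : m ≠ 0)
    {L : (Fin D → ℝ) → ℝ → (Fin D → ℝ) → ℝ} (hL : L = kleinGordonLagrangian gInv m) :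
    (∀ (ψ : (Fin D → ℝ) → ℝ) (x : Fin D → ℝ), DifferentiableAt ℝ ψ x → ∀ μ : Fin D,
      ∑ ν, g μ ν * Lp L ν x (ψ x) (grad ψ x) =
        (-(m ^ 2)⁻¹) * pd (fun y => Lu L y (ψ y) (grad ψ y)) μ x) ∧
    (∀ (x : Fin D → ℝ) (u : ℝ) (p : Fin D → ℝ) (μ ν : Fin D),
      Lp L μ x u p * (∑ α, g ν α * Lp L α x u p) -
        (1 / 2) * (if μ = ν then
          (-(m ^ 2)⁻¹) * (Lu L x u p) ^ 2 + ∑ α, ∑ β, g α β * Lp L α x u p * Lp L β x u p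
        else 0) =
      (∑ α, gInv μ α * p α) * p ν -
        (if μ = ν then
          (1 / 2) * (∑ α, ∑ β, gInv α β * p α * p β) - (1 / 2) * m ^ 2 * u ^ 2
        else 0)) := by
  have hlower (p : Fin D → ℝ) (μ : Fin D) : ∑ ν, g μ ν * (gInv *ᵥ p) ν = p μ :=
    congrFun (mulVec_mulVec_of_mul_eq_one hg p) μ
  simp only [hL, Lp_kleinGordonLagrangian hsymm, Lu_kleinGordonLagrangian, hlower]
  refine ⟨fun ψ x hψ μ => ?_, fun _ u p μ ν => ?_⟩
  · rw [pd_const_mul hψ, grad]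
    field_simp
  · have hraise : ∑ α, gInv μ α * p α = (gInv *ᵥ p) μ := rfl
    have hmass : (-(m ^ 2)⁻¹) * (-m ^ 2 * u) ^ 2 = -(m ^ 2 * u ^ 2) := by field_simp
    rw [hraise, hmass, sum_sum_mul_mul_eq_dotProduct_mulVec, sum_sum_mul_mul_eq_dotProduct_mulVec,
      mulVec_dotProduct_mulVec_mulVec_of_mul_eq_one hg]
    split_ifs <;> ring

end KleinGordon

lemma of_eta_eq_diagonal (D : ℕ) :
    Matrix.of (eta D) = diagonal fun μ : Fin D => if (μ : ℕ) = 0 then 1 else -1 :=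
  rfl

lemma isSymm_of_eta (D : ℕ) : (Matrix.of (eta D)).IsSymm := by
  rw [of_eta_eq_diagonal]
  exact isSymm_diagonal _

lemma of_eta_mul_self (D : ℕ) : Matrix.of (eta D) * Matrix.of (eta D) = 1 := by
  rw [of_eta_eq_diagonal, diagonal_mul_diagonal, ← diagonal_one]
  congr 1
  ext μ
  split_ifs <;> norm_num

/-- The free Klein–Gordon theory satisfies the hypothesis of Theorem 3.4 with
`ρ = -m⁻²`, and the resulting current `K^μ_ν` degenerates to the
Energy–Momentum tensor. -/
theorem klein_gordon_K_equals_T {D : ℕ} (hD : 1 ≤ D) (m : ℝ) (hm : m ≠ 0)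
    (L : (Fin D → ℝ) → ℝ → (Fin D → ℝ) → ℝ)
    (hLdef : ∀ x u p, L x u p =
      (1/2) * (∑ μ, ∑ ν, eta D μ ν * p μ * p ν) - (1/2) * m^2 * u^2) :
    (∀ ψ : (Fin D → ℝ) → ℝ, ContDiff ℝ (⊤ : ℕ∞) ψ → ∀ (x : Fin D → ℝ) (μ : Fin D),
      ∑ ν, eta D μ ν * Lp L ν x (ψ x) (grad ψ x) =
        (-(m^2)⁻¹) * pd (fun y => Lu L y (ψ y) (grad ψ y)) μ x) ∧
    (∀ φ : (Fin D → ℝ) → ℝ, ContDiff ℝ (⊤ : ℕ∞) φ → ∀ (μ ν : Fin D) (x : Fin D → ℝ),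
      Lp L μ x (φ x) (grad φ x) * (∑ α, eta D ν α * Lp L α x (φ x) (grad φ x)) -
        (1/2) * (if μ = ν then
          (-(m^2)⁻¹) * (Lu L x (φ x) (grad φ x))^2 +
            ∑ α, ∑ β, eta D α β * Lp L α x (φ x) (grad φ x) * Lp L β x (φ x) (grad φ x)
        else 0) =
      pdu φ μ x * pd φ ν x -
        (if μ = ν then
          (1/2) * (∑ α, ∑ β, eta D α β * pd φ α x * pd φ β x) - (1/2) * m^2 * (φ x)^2
        else 0)) := by
  have hL : L = kleinGordonLagrangian (Matrix.of (eta D)) m :=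
    funext fun x => funext fun u => funext fun p => hLdef x u p
  obtain ⟨hρ, hK⟩ := klein_gordon_K_equals_T_general (isSymm_of_eta D) (of_eta_mul_self D) hm hL
  exact ⟨fun ψ hψ x => hρ ψ x (hψ.differentiable (by simp) x),
    fun φ _ μ ν x => hK x (φ x) (grad φ x) μ ν⟩

end
end

section
/- Energy–Momentum tensor of the nonlinear complex scalar theory (eq. (4.14)): let U : ℝ → ℝ be smooth and let φ : (Fin D → ℝ) → ℂ be a smooth complex field solving □φ x + U'(‖φ x‖²)·φ x = 0 for all x (the complex d'Alembertian acting componentwise; ‖φ x‖² = (φ x)·conj(φ x)). Then for each fixed ν, the (real-valued) tensor T^μ_ν x := ∂^μ(fun y ↦ conj (φ y)) x · ∂_ν φ x + ∂^μ φ x · ∂_ν(fun y ↦ conj (φ y)) x − (if μ = ν then Σ_α ∂_α φ x · ∂^α(fun y ↦ conj (φ y)) x − U(‖φ x‖²) else 0) is conserved: Σ_μ ∂_μ (fun y ↦ T^μ_ν y) x = 0 for all x. -/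
open scoped BigOperators ComplexConjugate

noncomputable section

/-- Spacetime partial derivative `∂_μ F x` of a complex-valued field. -/
def pdC {D : ℕ} (F : (Fin D → ℝ) → ℂ) (μ : Fin D) (x : Fin D → ℝ) : ℂ :=
  fderiv ℝ F x (Pi.single μ 1)

/-- Raised-index partial derivative `∂^μ F x` of a complex-valued field. -/
def pduC {D : ℕ} (F : (Fin D → ℝ) → ℂ) (μ : Fin D) (x : Fin D → ℝ) : ℂ :=
  ∑ ν, (eta D μ ν : ℂ) * pdC F ν x

/-- d'Alembertian `□F x` of a complex-valued field. -/
def boxC {D : ℕ} (F : (Fin D → ℝ) → ℂ) (x : Fin D → ℝ) : ℂ :=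
  ∑ μ, pdC (fun y => pduC F μ y) μ x

/-!
For any two fields `φ`, `ψ` and any potential `V`, the product rule, the symmetry of second
derivatives and the symmetry of the metric give the off-shell identity
`∂_μ T^μ_ν = □ψ · ∂_ν φ + □φ · ∂_ν ψ + ∂_ν V`, in which the terms `∂^μ ψ · ∂_μ ∂_ν φ` and
`∂^μ φ · ∂_μ ∂_ν ψ` have cancelled against the gradient of the kinetic term. For `ψ = conj φ` and
`V = U(φ ψ)`, the field equation and its conjugate turn the right-hand side into
`-(deriv U)(φ ψ) · ∂_ν (φ ψ) + ∂_ν (U(φ ψ)) = 0`.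
-/

section PartialDerivatives

variable {D : ℕ} {F G : (Fin D → ℝ) → ℂ} {x : Fin D → ℝ}

lemma pdC_add (hF : DifferentiableAt ℝ F x) (hG : DifferentiableAt ℝ G x) (μ : Fin D) :
    pdC (fun y => F y + G y) μ x = pdC F μ x + pdC G μ x := by
  simp only [pdC, fderiv_fun_add hF hG, add_apply]

lemma pdC_sub (hF : DifferentiableAt ℝ F x) (hG : DifferentiableAt ℝ G x) (μ : Fin D) :
    pdC (fun y => F y - G y) μ x = pdC F μ x - pdC G μ x := by
  simp only [pdC, fderiv_fun_sub hF hG, sub_apply]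

lemma pdC_mul (hF : DifferentiableAt ℝ F x) (hG : DifferentiableAt ℝ G x) (μ : Fin D) :
    pdC (fun y => F y * G y) μ x = pdC F μ x * G x + F x * pdC G μ x := by
  simp only [pdC, fderiv_fun_mul hF hG, add_apply, smul_apply, smul_eq_mul]
  ring

lemma pdC_const_mul (hF : DifferentiableAt ℝ F x) (c : ℂ) (μ : Fin D) :
    pdC (fun y => c * F y) μ x = c * pdC F μ x := by
  simp only [pdC, fderiv_const_mul hF, smul_apply, smul_eq_mul]

lemma pdC_sum {ι : Type*} {s : Finset ι} {F : ι → (Fin D → ℝ) → ℂ}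
    (hF : ∀ i ∈ s, DifferentiableAt ℝ (F i) x) (μ : Fin D) :
    pdC (fun y => ∑ i ∈ s, F i y) μ x = ∑ i ∈ s, pdC (F i) μ x := by
  simp only [pdC, fderiv_fun_sum hF, sum_apply]

lemma pdC_conj (F : (Fin D → ℝ) → ℂ) (μ : Fin D) (x : Fin D → ℝ) :
    pdC (fun y => conj (F y)) μ x = conj (pdC F μ x) :=
  congr($(Complex.conjCLE.comp_fderiv (f := F) (x := x)) (Pi.single μ 1))

lemma pdC_ofReal_comp {U : ℝ → ℝ} {f : (Fin D → ℝ) → ℝ} (hU : DifferentiableAt ℝ U (f x))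
    (hf : DifferentiableAt ℝ f x) (μ : Fin D) :
    pdC (fun y => (U (f y) : ℂ)) μ x =
      ((deriv U (f x) : ℝ) : ℂ) * pdC (fun y => (f y : ℂ)) μ x := by
  have hf_cast := Complex.ofRealCLM.hasFDerivAt.comp x hf.hasFDerivAt
  have hUf_cast :=
    Complex.ofRealCLM.hasFDerivAt.comp x (hU.hasDerivAt.comp_hasFDerivAt x hf.hasFDerivAt)
  have hf_fderiv : fderiv ℝ (fun y => (f y : ℂ)) x = _ := hf_cast.fderiv
  have hUf_fderiv : fderiv ℝ (fun y => (U (f y) : ℂ)) x = _ := hUf_cast.fderiv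
  simp [pdC, hf_fderiv, hUf_fderiv]

lemma differentiableAt_normSq_comp (hF : DifferentiableAt ℝ F x) :
    DifferentiableAt ℝ (fun y => Complex.normSq (F y)) x := by
  simpa only [Complex.normSq_eq_norm_sq] using hF.norm_sq ℝ

lemma pdC_ofReal_comp_normSq {U : ℝ → ℝ} (hU : DifferentiableAt ℝ U (Complex.normSq (F x)))
    (hF : DifferentiableAt ℝ F x) (μ : Fin D) :
    pdC (fun y => (U (Complex.normSq (F y)) : ℂ)) μ x =
      ((deriv U (Complex.normSq (F x)) : ℝ) : ℂ) *
        (pdC F μ x * conj (F x) + F x * pdC (fun y => conj (F y)) μ x) := by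
  rw [pdC_ofReal_comp hU (differentiableAt_normSq_comp hF)]
  simp only [← Complex.mul_conj]
  have hF_conj : DifferentiableAt ℝ (fun y => conj (F y)) x := hF.star
  rw [pdC_mul hF hF_conj]

lemma differentiableAt_fderiv_of_contDiffAt_two {𝕜 E H : Type*} [NontriviallyNormedField 𝕜]
    [NormedAddCommGroup E] [NormedSpace 𝕜 E] [NormedAddCommGroup H] [NormedSpace 𝕜 H]
    {f : E → H} {x : E} (hf : ContDiffAt 𝕜 2 f x) : DifferentiableAt 𝕜 (fderiv 𝕜 f) x :=
  (hf.fderiv_right (m := 1) one_add_one_eq_two.le).differentiableAt one_ne_zero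

lemma differentiableAt_pdC (hF : ContDiffAt ℝ 2 F x) (μ : Fin D) :
    DifferentiableAt ℝ (pdC F μ) x :=
  (differentiableAt_fderiv_of_contDiffAt_two hF).clm_apply (differentiableAt_const _)

lemma pdC_pdC_comm (hF : ContDiffAt ℝ 2 F x) (μ ν : Fin D) :
    pdC (pdC F μ) ν x = pdC (pdC F ν) μ x := by
  have hF_fderiv := differentiableAt_fderiv_of_contDiffAt_two hF
  have pdC_pdC_eq (α β : Fin D) :
      pdC (pdC F α) β x = fderiv ℝ (fderiv ℝ F) x (Pi.single β 1) (Pi.single α 1) := by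
    change fderiv ℝ (fun y => fderiv ℝ F y (Pi.single α 1)) x (Pi.single β 1) = _
    simp [fderiv_clm_apply hF_fderiv (differentiableAt_const _)]
  rw [pdC_pdC_eq, pdC_pdC_eq]
  exact (hF.isSymmSndFDerivAt (by simp)).eq _ _

end PartialDerivatives

section RaisedDerivatives

variable {D : ℕ} {F G : (Fin D → ℝ) → ℂ} {x : Fin D → ℝ}

lemma eta_comm (μ ν : Fin D) : eta D μ ν = eta D ν μ := by
  unfold eta
  grind

lemma sum_pdC_mul_pduC_comm (F G : (Fin D → ℝ) → ℂ) (x : Fin D → ℝ) :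
    ∑ α, pdC F α x * pduC G α x = ∑ α, pduC F α x * pdC G α x := by
  simp only [pduC, Finset.mul_sum, Finset.sum_mul]
  rw [Finset.sum_comm]
  refine Finset.sum_congr rfl fun β _ => Finset.sum_congr rfl fun α _ => ?_
  rw [eta_comm α β]
  ring

lemma differentiableAt_pduC (hF : ContDiffAt ℝ 2 F x) (μ : Fin D) :
    DifferentiableAt ℝ (pduC F μ) x :=
  DifferentiableAt.fun_sum fun ν _ => (differentiableAt_pdC hF ν).const_mul _

lemma pdC_pduC_comm (hF : ContDiffAt ℝ 2 F x) (μ ν : Fin D) :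
    pdC (pduC F μ) ν x = pduC (pdC F ν) μ x := by
  have hdF := differentiableAt_pdC hF
  calc pdC (pduC F μ) ν x
      = ∑ α, pdC (fun y => (eta D μ α : ℂ) * pdC F α y) ν x :=
        pdC_sum (fun α _ => (hdF α).const_mul _) ν
    _ = ∑ α, (eta D μ α : ℂ) * pdC (pdC F ν) α x :=
        Finset.sum_congr rfl fun α _ => by rw [pdC_const_mul (hdF α), pdC_pdC_comm hF]

lemma pduC_conj (F : (Fin D → ℝ) → ℂ) (μ : Fin D) (x : Fin D → ℝ) :
    pduC (fun y => conj (F y)) μ x = conj (pduC F μ x) := by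
  simp only [pduC, pdC_conj, map_sum, map_mul, Complex.conj_ofReal]

lemma boxC_conj (F : (Fin D → ℝ) → ℂ) (x : Fin D → ℝ) :
    boxC (fun y => conj (F y)) x = conj (boxC F x) := by
  simp only [boxC, pduC_conj, pdC_conj, map_sum]

lemma sum_pdC_pduC_mul_pdC (hF : ContDiffAt ℝ 2 F x) (hG : ContDiffAt ℝ 2 G x) (ν : Fin D) :
    ∑ μ, pdC (fun y => pduC F μ y * pdC G ν y) μ x =
      boxC F x * pdC G ν x + ∑ μ, pduC F μ x * pdC (pdC G ν) μ x := by
  simp only [pdC_mul (differentiableAt_pduC hF _) (differentiableAt_pdC hG ν),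
    Finset.sum_add_distrib, ← Finset.sum_mul, boxC]

lemma differentiableAt_sum_pdC_mul_pduC (hF : ContDiffAt ℝ 2 F x) (hG : ContDiffAt ℝ 2 G x) :
    DifferentiableAt ℝ (fun y => ∑ α, pdC F α y * pduC G α y) x :=
  DifferentiableAt.fun_sum fun α _ => (differentiableAt_pdC hF α).mul (differentiableAt_pduC hG α)

lemma pdC_sum_pdC_mul_pduC (hF : ContDiffAt ℝ 2 F x) (hG : ContDiffAt ℝ 2 G x) (ν : Fin D) :
    pdC (fun y => ∑ α, pdC F α y * pduC G α y) ν x =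
      ∑ α, pduC G α x * pdC (pdC F ν) α x + ∑ α, pduC F α x * pdC (pdC G ν) α x := by
  have hdF := differentiableAt_pdC hF
  have hdG := differentiableAt_pduC hG
  calc pdC (fun y => ∑ α, pdC F α y * pduC G α y) ν x
      = ∑ α, pdC (fun y => pdC F α y * pduC G α y) ν x :=
        pdC_sum (fun α _ => (hdF α).mul (hdG α)) ν
    _ = ∑ α, (pduC G α x * pdC (pdC F ν) α x + pdC F α x * pduC (pdC G ν) α x) :=
        Finset.sum_congr rfl fun α _ => by
          rw [pdC_mul (hdF α) (hdG α), pdC_pdC_comm hF, pdC_pduC_comm hG, mul_comm (pduC G α x)]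
    _ = ∑ α, pduC G α x * pdC (pdC F ν) α x + ∑ α, pduC F α x * pdC (pdC G ν) α x := by
        rw [Finset.sum_add_distrib, sum_pdC_mul_pduC_comm F]

end RaisedDerivatives

section EnergyMomentum

variable {D : ℕ} {φ ψ V : (Fin D → ℝ) → ℂ} {x : Fin D → ℝ}

/-- The Lagrangian density `∂_α φ ∂^α ψ - V` of a pair of fields `φ`, `ψ`, where `V` is the
potential as a function on spacetime. The complex scalar theory is the case `ψ = conj φ`. -/
def lagrangian (φ ψ V : (Fin D → ℝ) → ℂ) (x : Fin D → ℝ) : ℂ :=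
  (∑ α, pdC φ α x * pduC ψ α x) - V x

/-- The energy–momentum tensor `T^μ_ν = ∂^μ ψ ∂_ν φ + ∂^μ φ ∂_ν ψ - δ^μ_ν L` of a pair of fields
`φ`, `ψ` with Lagrangian density `L = ∂_α φ ∂^α ψ - V`; treating `φ` and `ψ` as independent fields
separates its divergence from the field equations. -/
def energyMomentum (φ ψ V : (Fin D → ℝ) → ℂ) (μ ν : Fin D) (x : Fin D → ℝ) : ℂ :=
  pduC ψ μ x * pdC φ ν x + pduC φ μ x * pdC ψ ν x - (if μ = ν then lagrangian φ ψ V x else 0)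

lemma sum_pdC_ite_eq (L : (Fin D → ℝ) → ℂ) (ν : Fin D) (x : Fin D → ℝ) :
    ∑ μ, pdC (fun y => if μ = ν then L y else 0) μ x = pdC L ν x := by
  rw [Finset.sum_eq_single_of_mem ν (Finset.mem_univ ν)]
  · simp only [if_true]
  · intro μ _ hμν
    simp [hμν, pdC]

lemma differentiableAt_lagrangian (hφ : ContDiffAt ℝ 2 φ x) (hψ : ContDiffAt ℝ 2 ψ x)
    (hV : DifferentiableAt ℝ V x) : DifferentiableAt ℝ (lagrangian φ ψ V) x :=
  (differentiableAt_sum_pdC_mul_pduC hφ hψ).sub hV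

lemma pdC_lagrangian (hφ : ContDiffAt ℝ 2 φ x) (hψ : ContDiffAt ℝ 2 ψ x)
    (hV : DifferentiableAt ℝ V x) (ν : Fin D) :
    pdC (lagrangian φ ψ V) ν x =
      ∑ α, pduC ψ α x * pdC (pdC φ ν) α x + ∑ α, pduC φ α x * pdC (pdC ψ ν) α x - pdC V ν x := by
  rw [← pdC_sum_pdC_mul_pduC hφ hψ]
  exact pdC_sub (differentiableAt_sum_pdC_mul_pduC hφ hψ) hV ν

theorem sum_pdC_energyMomentum (hφ : ContDiffAt ℝ 2 φ x) (hψ : ContDiffAt ℝ 2 ψ x)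
    (hV : DifferentiableAt ℝ V x) (ν : Fin D) :
    ∑ μ, pdC (energyMomentum φ ψ V μ ν) μ x =
      boxC ψ x * pdC φ ν x + boxC φ x * pdC ψ ν x + pdC V ν x := by
  have hψφ (μ : Fin D) : DifferentiableAt ℝ (fun y => pduC ψ μ y * pdC φ ν y) x :=
    (differentiableAt_pduC hψ μ).mul (differentiableAt_pdC hφ ν)
  have hφψ (μ : Fin D) : DifferentiableAt ℝ (fun y => pduC φ μ y * pdC ψ ν y) x :=
    (differentiableAt_pduC hφ μ).mul (differentiableAt_pdC hψ ν)
  have hδL (μ : Fin D) :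
      DifferentiableAt ℝ (fun y => if μ = ν then lagrangian φ ψ V y else 0) x := by
    split_ifs
    exacts [differentiableAt_lagrangian hφ hψ hV, differentiableAt_const 0]
  have hterm (μ : Fin D) : pdC (energyMomentum φ ψ V μ ν) μ x =
      pdC (fun y => pduC ψ μ y * pdC φ ν y) μ x + pdC (fun y => pduC φ μ y * pdC ψ ν y) μ x -
        pdC (fun y => if μ = ν then lagrangian φ ψ V y else 0) μ x := by
    rw [← pdC_add (hψφ μ) (hφψ μ)]
    exact pdC_sub ((hψφ μ).add (hφψ μ)) (hδL μ) μ
  simp only [hterm, Finset.sum_sub_distrib, Finset.sum_add_distrib]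
  rw [sum_pdC_pduC_mul_pdC hψ hφ, sum_pdC_pduC_mul_pdC hφ hψ, sum_pdC_ite_eq,
    pdC_lagrangian hφ hψ hV]
  ring

theorem complex_scalar_energy_momentum_conserved_general {U : ℝ → ℝ}
    (hU : DifferentiableAt ℝ U (Complex.normSq (φ x))) (hφ : ContDiffAt ℝ 2 φ x)
    (hEL : boxC φ x + ((deriv U (Complex.normSq (φ x)) : ℝ) : ℂ) * φ x = 0) (ν : Fin D) :
    ∑ μ, pdC (energyMomentum φ (fun y => conj (φ y))
      (fun y => (U (Complex.normSq (φ y)) : ℂ)) μ ν) μ x = 0 := by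
  have hφ_diff : DifferentiableAt ℝ φ x := hφ.differentiableAt two_ne_zero
  have hconj : ContDiffAt ℝ 2 (fun y => conj (φ y)) x :=
    Complex.conjCLE.contDiff.contDiffAt.comp x hφ
  have hV : DifferentiableAt ℝ (fun y => (U (Complex.normSq (φ y)) : ℂ)) x :=
    Complex.ofRealCLM.differentiableAt.comp x
      (hU.comp x (differentiableAt_normSq_comp hφ_diff))
  have hEL_conj : boxC (fun y => conj (φ y)) x +
      ((deriv U (Complex.normSq (φ x)) : ℝ) : ℂ) * conj (φ x) = 0 := by
    simpa [boxC_conj] using congr(conj $hEL)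
  rw [sum_pdC_energyMomentum hφ hconj hV, pdC_ofReal_comp_normSq hU hφ_diff]
  linear_combination pdC φ ν x * hEL_conj + pdC (fun y => conj (φ y)) ν x * hEL

end EnergyMomentum

/-- Energy–Momentum tensor of the nonlinear complex scalar theory (eq. (4.14)). -/
theorem complex_scalar_energy_momentum_conserved {D : ℕ} (hD : 1 ≤ D)
    (U : ℝ → ℝ) (hU : ContDiff ℝ (⊤ : ℕ∞) U)
    (φ : (Fin D → ℝ) → ℂ) (hφ : ContDiff ℝ (⊤ : ℕ∞) φ)
    (hEL : ∀ x, boxC φ x + ((deriv U (Complex.normSq (φ x)) : ℝ) : ℂ) * φ x = 0) :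
    ∀ (ν : Fin D) (x : Fin D → ℝ),
      ∑ μ, pdC (fun y =>
        pduC (fun z => conj (φ z)) μ y * pdC φ ν y +
          pduC φ μ y * pdC (fun z => conj (φ z)) ν y -
          (if μ = ν then
            (∑ α, pdC φ α y * pduC (fun z => conj (φ z)) α y) -
              ((U (Complex.normSq (φ y)) : ℝ) : ℂ)
          else 0)) μ x = 0 := by
  exact fun ν x => complex_scalar_energy_momentum_conserved_general
    (hU.differentiable (by simp) _) (contDiff_infty.1 hφ 2).contDiffAt (hEL x) ν

end
end
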